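/- Let J ≥ 2 be an integer and δ > 1 a real number. For j = 1, …, J, set μ_j = (j−1)/(J−1) and σ = (δ/2)/(J−1), and define ω̂_j : ℝ → ℝ by ω̂_j(x) = (1 + cos(π(x − μ_j)/σ))² if |x − μ_j| ≤ σ and ω̂_j(x) = 0 otherwise. Then for every x ∈ [0,1], the sum S(x) = ∑_{j=1}^J ω̂_j(x) is strictly positive, and consequently the normalized window functions ω_j(x) = ω̂_j(x)/S(x) satisfy ∑_{j=1}^J ω_j(x) = 1 for all x ∈ [0,1]. -/

import Mathlib

/-!
The centers are spaced `1 / (J - 1)` apart, so every `x ∈ [0,1]` is within `1 / (2 (J - 1))` of some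
center. As `δ > 1`, this distance is strictly less than `σ`, so the argument of the cosine lies
strictly between `-π` and `π` and that window is positive at `x`. All windows are nonnegative,
hence `S x > 0`, and dividing by `S x` gives sum one.
-/

open Real

theorem neg_one_lt_cos_of_abs_lt_pi {t : ℝ} (ht : |t| < π) : -1 < Real.cos t := by
  rw [← Real.cos_abs, ← Real.cos_pi]
  exact Real.cos_lt_cos_of_nonneg_of_le_pi (abs_nonneg t) le_rfl ht

/-- The nearest grid point to `x` among `0, 1/(J-1), …, 1`, with indices starting at one. -/
theorem exists_center_near (J : ℕ) (hJ : 2 ≤ J) (x : ℝ) (hx : x ∈ Set.Icc (0 : ℝ) 1) :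
    ∃ j ∈ Finset.Icc 1 J, |x * ((J : ℝ) - 1) - ((j : ℝ) - 1)| ≤ 1 / 2 := by
  have hJ' : (2 : ℝ) ≤ J := by exact_mod_cast hJ
  obtain ⟨h0, h1⟩ := hx
  have hy0 : 0 ≤ x * ((J : ℝ) - 1) := mul_nonneg h0 (by linarith)
  have hy1 : x * ((J : ℝ) - 1) ≤ (J : ℝ) - 1 := by nlinarith
  have hle := Nat.floor_le (show 0 ≤ x * ((J : ℝ) - 1) + 1 / 2 by linarith)
  have hlt := Nat.lt_floor_add_one (x * ((J : ℝ) - 1) + 1 / 2)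
  refine ⟨⌊x * ((J : ℝ) - 1) + 1 / 2⌋₊ + 1, Finset.mem_Icc.2 ⟨by omega, ?_⟩, ?_⟩
  · have : ⌊x * ((J : ℝ) - 1) + 1 / 2⌋₊ < J := by
      rw [Nat.floor_lt (by linarith)]
      linarith
    omega
  · push_cast
    rw [abs_le]
    constructor <;> linarith

/-- With overlap ratio `δ > 1`, the sum of the cosine window functions is
strictly positive on `[0,1]`, and the normalized windows sum to one there. -/
theorem window_sum_pos_and_partition_of_unity
    (J : ℕ) (hJ : 2 ≤ J) (δ : ℝ) (hδ : 1 < δ)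
    (μ : ℕ → ℝ) (hμ : ∀ j, μ j = ((j : ℝ) - 1) / ((J : ℝ) - 1))
    (σ : ℝ) (hσ : σ = (δ / 2) / ((J : ℝ) - 1))
    (ωhat : ℕ → ℝ → ℝ)
    (hωhat : ∀ j x, ωhat j x =
      if |x - μ j| ≤ σ then (1 + Real.cos (π * (x - μ j) / σ)) ^ 2 else 0)
    (S : ℝ → ℝ) (hS : ∀ x, S x = ∑ j ∈ Finset.Icc 1 J, ωhat j x)
    (ω : ℕ → ℝ → ℝ) (hω : ∀ j x, ω j x = ωhat j x / S x) :
    ∀ x ∈ Set.Icc (0 : ℝ) 1,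
      0 < S x ∧ ∑ j ∈ Finset.Icc 1 J, ω j x = 1 := by
  intro x hx
  have hJ1 : (0 : ℝ) < (J : ℝ) - 1 := by
    have : (2 : ℝ) ≤ J := by exact_mod_cast hJ
    linarith
  have hσ0 : 0 < σ := by
    rw [hσ]
    exact div_pos (by linarith) hJ1
  have hnonneg : ∀ j, 0 ≤ ωhat j x := by
    intro j
    rw [hωhat]
    split_ifs
    · exact sq_nonneg _
    · exact le_rfl
  obtain ⟨j, hj, hjx⟩ := exists_center_near J hJ x hx
  have hdist : |x - μ j| < σ := by
    have heq : x - μ j = (x * ((J : ℝ) - 1) - ((j : ℝ) - 1)) / ((J : ℝ) - 1) := by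
      rw [hμ]
      field_simp
    rw [heq, abs_div, abs_of_pos hJ1, hσ]
    exact div_lt_div_of_pos_right (by linarith) hJ1
  have hpos : 0 < ωhat j x := by
    rw [hωhat, if_pos hdist.le]
    have harg : |π * (x - μ j) / σ| < π := by
      rw [abs_div, abs_mul, abs_of_pos Real.pi_pos, abs_of_pos hσ0, div_lt_iff₀ hσ0]
      exact mul_lt_mul_of_pos_left hdist Real.pi_pos
    have := neg_one_lt_cos_of_abs_lt_pi harg
    exact pow_pos (by linarith) 2
  have hSpos : 0 < S x := by
    rw [hS]
    exact Finset.sum_pos' (fun i _ => hnonneg i) ⟨j, hj, hpos⟩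
  refine ⟨hSpos, ?_⟩
  simp only [hω]
  rw [← Finset.sum_div, ← hS, div_self hSpos.ne']
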